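/- For a core matching K with k(K) ≥ 3 crossings, n_1(K) ≤ 3·k(K), and equality holds if and only if n_1(K) = 3k, n_k(K) = 1 and n_i(K) = 0 for i ∉ {1,k}. -/

import Mathlib

/-- Two chords `(p.1, p.2)` and `(q.1, q.2)` of a circle with vertices labeled
`0, 1, …, n-1` in circular order interleave, i.e. cross, when
`p.1 < q.1 < p.2 < q.2`. -/
def Interleaves {n : ℕ} (p q : Fin n × Fin n) : Prop :=
  p.1 < q.1 ∧ q.1 < p.2 ∧ p.2 < q.2

instance {n : ℕ} (p q : Fin n × Fin n) : Decidable (Interleaves p q) :=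
  inferInstanceAs (Decidable (_ ∧ _ ∧ _))

/-- The number of crossings of a set of chords (each chord recorded with its
endpoints in increasing order): the number of unordered pairs of chords whose
endpoints interleave around the circle. -/
def crossNum {n : ℕ} (D : Finset (Fin n × Fin n)) : ℕ :=
  ((D ×ˢ D).filter fun pq => Interleaves pq.1 pq.2).card

/-- A perfect matching of the `n` points `0, …, n-1` on a circle: a set of
chords, each recorded with increasing endpoints, such that every vertex
belongs to exactly one chord. -/
structure CircMatching (n : ℕ) where
  chords : Finset (Fin n × Fin n)
  lt : ∀ p ∈ chords, p.1 < p.2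
  mem_unique : ∀ v : Fin n, ∃! p, p ∈ chords ∧ (p.1 = v ∨ p.2 = v)


/-- Two chords cross when their endpoints interleave, in either order. -/
def CrossRel {n : ℕ} (p q : Fin n × Fin n) : Prop :=
  Interleaves p q ∨ Interleaves q p

/-- A core matching: a perfect matching in which every chord is involved in at
least one crossing. -/
def IsCoreMatching {n : ℕ} (M : CircMatching n) : Prop :=
  ∀ p ∈ M.chords, ∃ q ∈ M.chords, CrossRel p q

/-- The `n` points on the unit circle, labeled in circular order. -/
noncomputable def circPt (n : ℕ) (j : Fin n) : ℂ :=
  Complex.exp (2 * (Real.pi : ℂ) * Complex.I * ((j : ℕ) : ℂ) / ((n : ℕ) : ℂ))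

/-- The chord of the unit circle joining the points labeled `p.1` and `p.2`,
as a segment in the plane. -/
noncomputable def chordSeg (n : ℕ) (p : Fin n × Fin n) : Set ℂ :=
  segment ℝ (circPt n p.1) (circPt n p.2)

/-- The complement of a set of chords in the closed unit disk. -/
noncomputable def diskComplement {n : ℕ} (D : Finset (Fin n × Fin n)) : Set ℂ :=
  Metric.closedBall (0 : ℂ) 1 \ ⋃ p ∈ D, chordSeg n p

/-- The regions of a set of chords: the connected components of the complement
of the chords in the closed unit disk. -/
noncomputable def regions {n : ℕ} (D : Finset (Fin n × Fin n)) : Set (Set ℂ) :=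
  {C | ∃ x ∈ diskComplement D, C = connectedComponentIn (diskComplement D) x}

/-- The number of boundary arcs of a region: the number of connected components
of its intersection with the unit circle. -/
noncomputable def arcCount (C : Set ℂ) : ℕ :=
  Nat.card (ConnectedComponents ↥(C ∩ Metric.sphere (0 : ℂ) 1))

/-- `nReg D i` is the number `nᵢ` of regions of the chord configuration `D`
having exactly `i` boundary arcs. -/
noncomputable def nReg {n : ℕ} (D : Finset (Fin n × Fin n)) (i : ℕ) : ℕ :=
  Nat.card {C : Set ℂ // C ∈ regions D ∧ arcCount C = i}

/-- The point of the unit circle at fraction `t / n` of a full turn. -/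
noncomputable def turnPt (n : ℕ) (t : ℝ) : ℂ :=
  ⟨Real.cos (2 * Real.pi * t / n), Real.sin (2 * Real.pi * t / n)⟩

/-- The affine function vanishing on the line through `turnPt n a` and `turnPt n b`. -/
noncomputable def chordForm (n : ℕ) (a b : ℝ) (z : ℂ) : ℝ :=
  z.re * Real.cos (Real.pi * (a + b) / n) + z.im * Real.sin (Real.pi * (a + b) / n)
    - Real.cos (Real.pi * (b - a) / n)

theorem circPt_eq_turnPt (n : ℕ) (j : Fin n) : circPt n j = turnPt n ((j : ℕ) : ℝ) := by
  have h : 2 * (Real.pi : ℂ) * Complex.I * ((j : ℕ) : ℂ) / ((n : ℕ) : ℂ)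
      = ((2 * Real.pi * ((j : ℕ) : ℝ) / n : ℝ) : ℂ) * Complex.I := by
    push_cast
    ring
  rw [circPt, h]
  apply Complex.ext
  · rw [Complex.exp_ofReal_mul_I_re, turnPt]
  · rw [Complex.exp_ofReal_mul_I_im, turnPt]

theorem norm_turnPt (n : ℕ) (t : ℝ) : ‖turnPt n t‖ = 1 := by
  have h : turnPt n t = Complex.exp (((2 * Real.pi * t / n : ℝ) : ℂ) * Complex.I) := by
    apply Complex.ext
    · rw [Complex.exp_ofReal_mul_I_re, turnPt]
    · rw [Complex.exp_ofReal_mul_I_im, turnPt]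
  rw [h, Complex.norm_exp_ofReal_mul_I]

theorem continuous_turnPt (n : ℕ) : Continuous (turnPt n) := by
  have h : turnPt n = fun t => Complex.exp (((2 * Real.pi * t / n : ℝ) : ℂ) * Complex.I) := by
    funext t
    apply Complex.ext
    · rw [Complex.exp_ofReal_mul_I_re, turnPt]
    · rw [Complex.exp_ofReal_mul_I_im, turnPt]
  rw [h]
  fun_prop

theorem continuous_chordForm (n : ℕ) (a b : ℝ) : Continuous (chordForm n a b) := by
  unfold chordForm
  fun_prop

theorem chordForm_combo (n : ℕ) (a b : ℝ) (x y : ℂ) {s t : ℝ} (h : s + t = 1) :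
    chordForm n a b (s • x + t • y) = s * chordForm n a b x + t * chordForm n a b y := by
  obtain rfl : t = 1 - s := by linarith
  simp only [chordForm, Complex.add_re, Complex.add_im, Complex.smul_re, Complex.smul_im,
    smul_eq_mul]
  ring

theorem chordForm_turnPt (n : ℕ) (a b t : ℝ) :
    chordForm n a b (turnPt n t)
      = 2 * Real.sin (Real.pi * (t - a) / n) * Real.sin (Real.pi * (b - t) / n) := by
  rw [chordForm, turnPt]
  set A := Real.pi * a / n with hA
  set B := Real.pi * b / n with hB
  set T := Real.pi * t / n with hT
  have e1 : Real.pi * (a + b) / n = A + B := by rw [hA, hB]; ring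
  have e2 : Real.pi * (b - a) / n = (T - A) + (B - T) := by rw [hA, hB]; ring
  have e3 : 2 * Real.pi * t / n = (T - A) - (B - T) + (A + B) := by rw [hA, hB, hT]; ring
  have e4 : Real.pi * (t - a) / n = T - A := by rw [hA, hT]; ring
  have e5 : Real.pi * (b - t) / n = B - T := by rw [hB, hT]; ring
  rw [e1, e2, e3, e4, e5]
  have h := Real.cos_sub ((T - A) - (B - T) + (A + B)) (A + B)
  rw [show (T - A) - (B - T) + (A + B) - (A + B) = (T - A) - (B - T) by ring] at h
  rw [← h, Real.cos_sub, Real.cos_add]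
  ring

theorem sin_turn_pos {n : ℕ} {s : ℝ} (h0 : 0 < s) (h1 : s < n) :
    0 < Real.sin (Real.pi * s / n) := by
  have hn : (0 : ℝ) < n := h0.trans h1
  apply Real.sin_pos_of_pos_of_lt_pi
  · have := Real.pi_pos
    positivity
  · rw [div_lt_iff₀ hn]
    exact mul_lt_mul_of_pos_left h1 Real.pi_pos

theorem sin_turn_nonneg {n : ℕ} {s : ℝ} (h0 : 0 ≤ s) (h1 : s ≤ n) :
    0 ≤ Real.sin (Real.pi * s / n) := by
  apply Real.sin_nonneg_of_nonneg_of_le_pi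
  · have := Real.pi_pos
    positivity
  · apply div_le_of_le_mul₀ (by positivity) Real.pi_pos.le
    exact mul_le_mul_of_nonneg_left h1 Real.pi_pos.le

theorem sin_turn_neg {n : ℕ} {s : ℝ} (h0 : s < 0) (h1 : -(n : ℝ) < s) :
    Real.sin (Real.pi * s / n) < 0 := by
  have h := sin_turn_pos (n := n) (s := -s) (by linarith) (by linarith)
  rw [show Real.pi * -s / n = -(Real.pi * s / n) by ring, Real.sin_neg] at h
  linarith

theorem chordForm_pos {n : ℕ} {a b t : ℝ} (ha : 0 ≤ a) (hb : b ≤ n) (h1 : a < t) (h2 : t < b) :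
    0 < chordForm n a b (turnPt n t) := by
  rw [chordForm_turnPt]
  have := sin_turn_pos (n := n) (s := t - a) (by linarith) (by linarith)
  have := sin_turn_pos (n := n) (s := b - t) (by linarith) (by linarith)
  positivity

theorem chordForm_neg {n : ℕ} {a b t : ℝ} (ha : 0 ≤ a) (hab : a < b) (hb : b < n) (h0 : 0 ≤ t)
    (hn : t < n) (h : t < a ∨ b < t) : chordForm n a b (turnPt n t) < 0 := by
  rw [chordForm_turnPt]
  rcases h with h | h
  · have h1 := sin_turn_neg (n := n) (s := t - a) (by linarith) (by linarith)
    have h2 := sin_turn_pos (n := n) (s := b - t) (by linarith) (by linarith)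
    nlinarith [mul_pos (neg_pos.2 h1) h2]
  · have h1 := sin_turn_neg (n := n) (s := b - t) (by linarith) (by linarith)
    have h2 := sin_turn_pos (n := n) (s := t - a) (by linarith) (by linarith)
    nlinarith [mul_pos (neg_pos.2 h1) h2]

theorem chordForm_nonpos {n : ℕ} {a b t : ℝ} (ha : 0 ≤ a) (hab : a < b) (hb : b ≤ n) (h0 : 0 ≤ t)
    (hn : t < n) (h : t ≤ a ∨ b ≤ t) : chordForm n a b (turnPt n t) ≤ 0 := by
  rw [chordForm_turnPt]
  rcases h with h | h
  · have h1 := sin_turn_nonneg (n := n) (s := a - t) (by linarith) (by linarith)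
    rw [show Real.pi * (a - t) / n = -(Real.pi * (t - a) / n) by ring, Real.sin_neg] at h1
    have h2 := sin_turn_nonneg (n := n) (s := b - t) (by linarith) (by linarith)
    nlinarith [mul_nonneg h1 h2]
  · have h1 := sin_turn_nonneg (n := n) (s := t - b) (by linarith) (by linarith)
    rw [show Real.pi * (t - b) / n = -(Real.pi * (b - t) / n) by ring, Real.sin_neg] at h1
    have h2 := sin_turn_nonneg (n := n) (s := t - a) (by linarith) (by linarith)
    nlinarith [mul_nonneg h1 h2]

theorem chordForm_left (n : ℕ) (a b : ℝ) : chordForm n a b (turnPt n a) = 0 := by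
  simp [chordForm_turnPt]

theorem chordForm_right (n : ℕ) (a b : ℝ) : chordForm n a b (turnPt n b) = 0 := by
  simp [chordForm_turnPt]

theorem exists_turnPt {n : ℕ} (hn : 0 < n) {z : ℂ} (hz : ‖z‖ = 1) :
    ∃ t : ℝ, 0 ≤ t ∧ t < n ∧ z = turnPt n t := by
  have hn' : (0 : ℝ) < n := by exact_mod_cast hn
  have hpi := Real.pi_pos
  have key : ∀ θ : ℝ, 0 ≤ θ → θ < 2 * Real.pi → z.re = Real.cos θ → z.im = Real.sin θ →
      ∃ t : ℝ, 0 ≤ t ∧ t < n ∧ z = turnPt n t := by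
    intro θ h0 h1 hr hi
    have e : 2 * Real.pi * (θ * n / (2 * Real.pi)) / n = θ := by field_simp
    refine ⟨θ * n / (2 * Real.pi), by positivity, ?_, ?_⟩
    · rw [div_lt_iff₀ (by positivity)]
      nlinarith
    · rw [turnPt, e, ← hr, ← hi]
  have hz0 : z ≠ 0 := by
    intro h
    simp [h] at hz
  have hr : z.re = Real.cos z.arg := by rw [Complex.cos_arg hz0, hz, div_one]
  have hi : z.im = Real.sin z.arg := by rw [Complex.sin_arg, hz, div_one]
  rcases le_or_gt 0 z.arg with h | h
  · exact key _ h (by linarith [Complex.arg_le_pi z]) hr hi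
  · refine key (z.arg + 2 * Real.pi) (by linarith [Complex.neg_pi_lt_arg z]) (by linarith) ?_ ?_
    · rw [Real.cos_add_two_pi, hr]
    · rw [Real.sin_add_two_pi, hi]

theorem chordForm_eq_zero_of_mem_chordSeg {n : ℕ} {p : Fin n × Fin n} {z : ℂ}
    (hz : z ∈ chordSeg n p) : chordForm n ((p.1 : ℕ) : ℝ) ((p.2 : ℕ) : ℝ) z = 0 := by
  obtain ⟨s, t, -, -, hst, rfl⟩ := hz
  rw [chordForm_combo _ _ _ _ _ hst, circPt_eq_turnPt, circPt_eq_turnPt, chordForm_left,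
    chordForm_right]
  simp

/-- The open circle arc between the points labeled `i` and `i + 1`. -/
def openArc {n : ℕ} (i : Fin n) : Set ℂ :=
  turnPt n '' Set.Ioo ((i : ℕ) : ℝ) ((i : ℕ) + 1)

/-- The arcs `i` and `j` lie on the same side of every chord in `D`. -/
def SameSide {n : ℕ} (D : Finset (Fin n × Fin n)) (i j : Fin n) : Prop :=
  ∀ q ∈ D, (q.1 ≤ i ∧ i < q.2) ↔ (q.1 ≤ j ∧ j < q.2)

theorem isPreconnected_openArc {n : ℕ} (i : Fin n) : IsPreconnected (openArc i) :=
  isPreconnected_Ioo.image _ (continuous_turnPt n).continuousOn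

theorem openArc_subset_sphere {n : ℕ} (i : Fin n) : openArc i ⊆ Metric.sphere (0 : ℂ) 1 := by
  rintro _ ⟨t, -, rfl⟩
  simp [norm_turnPt]

theorem fin_cast_add_one_le {n : ℕ} (i : Fin n) : ((i : ℕ) : ℝ) + 1 ≤ n := by
  exact_mod_cast i.isLt

theorem mem_openArc_iff {n : ℕ} (i : Fin n) {z : ℂ} (hz : ‖z‖ = 1) :
    z ∈ openArc i ↔ 0 < chordForm n ((i : ℕ) : ℝ) ((i : ℕ) + 1) z := by
  constructor
  · rintro ⟨t, ⟨h1, h2⟩, rfl⟩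
    exact chordForm_pos (by positivity) (fin_cast_add_one_le i) h1 h2
  · intro h
    obtain ⟨t, h0, h1, rfl⟩ := exists_turnPt (Fin.pos i) hz
    refine ⟨t, ?_, rfl⟩
    by_contra hc
    refine absurd h (not_lt.2 (chordForm_nonpos (by positivity) (by linarith)
      (fin_cast_add_one_le i) h0 h1 ?_))
    by_contra! hh
    exact hc ⟨hh.1, hh.2⟩

theorem openArc_disjoint {n : ℕ} {i j : Fin n} {z : ℂ} (hi : z ∈ openArc i) (hj : z ∈ openArc j) :
    i = j := by
  have h := (mem_openArc_iff j (by simpa using openArc_subset_sphere j hj)).1 hj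
  obtain ⟨t, ⟨h1, h2⟩, rfl⟩ := hi
  have hb := fin_cast_add_one_le i
  have hi0 : (0 : ℝ) ≤ ((i : ℕ) : ℝ) := by positivity
  by_contra hne
  refine absurd h (not_lt.2 (chordForm_nonpos (by positivity) (by linarith)
    (fin_cast_add_one_le j) (by linarith) (by linarith) ?_))
  rcases lt_or_gt_of_ne hne with hlt | hlt
  · left
    have : ((i : ℕ) : ℝ) + 1 ≤ (j : ℕ) := by exact_mod_cast (Fin.lt_def.1 hlt)
    linarith
  · right
    have : ((j : ℕ) : ℝ) + 1 ≤ (i : ℕ) := by exact_mod_cast (Fin.lt_def.1 hlt)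
    linarith

theorem chordForm_openArc {n : ℕ} {p : Fin n × Fin n} (hp : p.1 < p.2) {i : Fin n} {z : ℂ}
    (hz : z ∈ openArc i) :
    ((p.1 ≤ i ∧ i < p.2) → 0 < chordForm n ((p.1 : ℕ) : ℝ) ((p.2 : ℕ) : ℝ) z) ∧
    (¬ (p.1 ≤ i ∧ i < p.2) → chordForm n ((p.1 : ℕ) : ℝ) ((p.2 : ℕ) : ℝ) z < 0) := by
  obtain ⟨t, ⟨h1, h2⟩, rfl⟩ := hz
  have hb := fin_cast_add_one_le i
  have hi0 : (0 : ℝ) ≤ ((i : ℕ) : ℝ) := by positivity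
  have h12 : ((p.1 : ℕ) : ℝ) < ((p.2 : ℕ) : ℝ) := by exact_mod_cast hp
  have h2n : ((p.2 : ℕ) : ℝ) < n := by exact_mod_cast p.2.isLt
  constructor
  · rintro ⟨ha, hb'⟩
    have ha' : ((p.1 : ℕ) : ℝ) ≤ (i : ℕ) := by exact_mod_cast ha
    have hb'' : ((i : ℕ) : ℝ) + 1 ≤ (p.2 : ℕ) := by exact_mod_cast (Fin.lt_def.1 hb')
    exact chordForm_pos (by positivity) h2n.le (by linarith) (by linarith)
  · intro h
    refine chordForm_neg (by positivity) h12 h2n (by linarith) (by linarith) ?_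
    by_cases hc : p.1 ≤ i
    · right
      have : p.2 ≤ i := by
        by_contra hcc
        exact h ⟨hc, not_le.1 hcc⟩
      have : ((p.2 : ℕ) : ℝ) ≤ (i : ℕ) := by exact_mod_cast this
      linarith
    · left
      have : ((i : ℕ) : ℝ) + 1 ≤ (p.1 : ℕ) := by exact_mod_cast (Fin.lt_def.1 (not_le.1 hc))
      linarith

theorem segment_subset_diskComplement {n : ℕ} {D : Finset (Fin n × Fin n)}
    (hD : ∀ p ∈ D, p.1 < p.2) {i j : Fin n} (hij : SameSide D i j) {x y : ℂ}
    (hx : x ∈ openArc i) (hy : y ∈ openArc j) : segment ℝ x y ⊆ diskComplement D := by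
  intro z hz
  refine ⟨?_, ?_⟩
  · exact (convex_closedBall (0 : ℂ) 1).segment_subset
      (Metric.sphere_subset_closedBall (openArc_subset_sphere i hx))
      (Metric.sphere_subset_closedBall (openArc_subset_sphere j hy)) hz
  · simp only [Set.mem_iUnion, not_exists]
    intro p hp hzp
    have h0 := chordForm_eq_zero_of_mem_chordSeg hzp
    obtain ⟨s, t, hs, ht, hst, rfl⟩ := hz
    rw [chordForm_combo _ _ _ _ _ hst] at h0
    have cx := chordForm_openArc (hD p hp) hx
    have cy := chordForm_openArc (hD p hp) hy
    set u := chordForm n ((p.1 : ℕ) : ℝ) ((p.2 : ℕ) : ℝ) x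
    set v := chordForm n ((p.1 : ℕ) : ℝ) ((p.2 : ℕ) : ℝ) y
    have hcases : 0 < s ∨ 0 < t := by
      by_contra! hh
      linarith
    by_cases hc : p.1 ≤ i ∧ i < p.2
    · have hu := cx.1 hc
      have hv := cy.1 ((hij p hp).1 hc)
      rcases hcases with h | h
      · nlinarith [mul_pos h hu, mul_nonneg ht hv.le]
      · nlinarith [mul_pos h hv, mul_nonneg hs hu.le]
    · have hu := neg_pos.2 (cx.2 hc)
      have hv := neg_pos.2 (cy.2 (fun hh => hc ((hij p hp).2 hh)))
      rcases hcases with h | h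
      · nlinarith [mul_pos h hu, mul_nonneg ht hv.le]
      · nlinarith [mul_pos h hv, mul_nonneg hs hu.le]

/-- The midpoint of the arc between the points labeled `i` and `i + 1`. -/
noncomputable def arcMid {n : ℕ} (i : Fin n) : ℂ := turnPt n ((i : ℕ) + 1 / 2)

theorem arcMid_mem {n : ℕ} (i : Fin n) : arcMid i ∈ openArc i :=
  ⟨_, ⟨by linarith, by linarith⟩, rfl⟩

/-- The region containing the arc between the points labeled `i` and `i + 1`. -/
noncomputable def arcRegion {n : ℕ} (D : Finset (Fin n × Fin n)) (i : Fin n) : Set ℂ :=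
  connectedComponentIn (diskComplement D) (arcMid i)

theorem arcRegion_eq_of_sameSide {n : ℕ} {D : Finset (Fin n × Fin n)}
    (hD : ∀ p ∈ D, p.1 < p.2) {i j : Fin n} (hij : SameSide D i j) :
    arcRegion D i = arcRegion D j := by
  apply connectedComponentIn_eq
  exact (convex_segment (arcMid i) (arcMid j)).isPreconnected.subset_connectedComponentIn
    (left_mem_segment ℝ _ _)
    (segment_subset_diskComplement hD hij (arcMid_mem i) (arcMid_mem j)) (right_mem_segment ℝ _ _)

theorem openArc_subset_arcRegion {n : ℕ} {D : Finset (Fin n × Fin n)}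
    (hD : ∀ p ∈ D, p.1 < p.2) (i : Fin n) : openArc i ⊆ arcRegion D i := by
  intro z hz
  have hs := segment_subset_diskComplement hD (fun _ _ => Iff.rfl : SameSide D i i)
    (arcMid_mem i) hz
  exact (convex_segment (arcMid i) z).isPreconnected.subset_connectedComponentIn
    (left_mem_segment ℝ _ _) hs (right_mem_segment ℝ _ _)

theorem arcRegion_mem_regions {n : ℕ} {D : Finset (Fin n × Fin n)}
    (hD : ∀ p ∈ D, p.1 < p.2) (i : Fin n) : arcRegion D i ∈ regions D := by
  refine ⟨arcMid i, ?_, rfl⟩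
  exact connectedComponentIn_subset _ _ (openArc_subset_arcRegion hD i (arcMid_mem i))

theorem arcRegion_eq_of_mem {n : ℕ} {D : Finset (Fin n × Fin n)} (hD : ∀ p ∈ D, p.1 < p.2)
    {C : Set ℂ} (hC : C ∈ regions D) {i : Fin n} {z : ℂ} (hz : z ∈ openArc i) (hzC : z ∈ C) :
    arcRegion D i = C := by
  obtain ⟨x, -, rfl⟩ := hC
  rw [connectedComponentIn_eq hzC, arcRegion]
  exact connectedComponentIn_eq (openArc_subset_arcRegion hD i hz)

theorem CircMatching.exists_openArc {n : ℕ} (M : CircMatching n) (hn : 0 < n) {z : ℂ}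
    (hz : ‖z‖ = 1) (hzM : z ∈ diskComplement M.chords) : ∃ i : Fin n, z ∈ openArc i := by
  obtain ⟨t, h0, h1, rfl⟩ := exists_turnPt hn hz
  have hlt : ⌊t⌋₊ < n := (Nat.floor_lt h0).2 h1
  refine ⟨⟨⌊t⌋₊, hlt⟩, t, ⟨?_, Nat.lt_floor_add_one t⟩, rfl⟩
  refine lt_of_le_of_ne (Nat.floor_le h0) ?_
  intro he
  obtain ⟨p, ⟨hp, hpv⟩, -⟩ := M.mem_unique ⟨⌊t⌋₊, hlt⟩
  refine hzM.2 ?_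
  simp only [Set.mem_iUnion]
  refine ⟨p, hp, ?_⟩
  have hc : turnPt n t = circPt n ⟨⌊t⌋₊, hlt⟩ := by
    rw [circPt_eq_turnPt]
    exact congrArg _ he.symm
  rw [hc]
  rcases hpv with h | h
  · rw [← h]
    exact left_mem_segment ℝ _ _
  · rw [← h]
    exact right_mem_segment ℝ _ _

theorem CircMatching.arcCount_eq {n : ℕ} (M : CircMatching n) (hn : 0 < n) {C : Set ℂ}
    (hC : C ∈ regions M.chords) :
    arcCount C = Nat.card {i : Fin n // arcRegion M.chords i = C} := by
  have hCD : C ⊆ diskComplement M.chords := by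
    obtain ⟨x, -, rfl⟩ := hC
    exact connectedComponentIn_subset _ _
  have hex : ∀ x : ↥(C ∩ Metric.sphere (0 : ℂ) 1), ∃ i : Fin n, (x : ℂ) ∈ openArc i := fun x =>
    M.exists_openArc hn (by simpa using x.2.2) (hCD x.2.1)
  choose g hg using hex
  have hcont : Continuous g := by
    rw [continuous_discrete_rng]
    intro i
    have : g ⁻¹' {i} = {x : ↥(C ∩ Metric.sphere (0 : ℂ) 1) |
        0 < chordForm n ((i : ℕ) : ℝ) ((i : ℕ) + 1) (x : ℂ)} := by
      ext x
      have hx1 : ‖(x : ℂ)‖ = 1 := by simpa using x.2.2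
      rw [Set.mem_preimage, Set.mem_singleton_iff, Set.mem_ofPred_eq, ← mem_openArc_iff i hx1]
      constructor
      · rintro rfl
        exact hg x
      · intro h
        exact openArc_disjoint (hg x) h
    rw [this]
    exact isOpen_lt continuous_const ((continuous_chordForm _ _ _).comp continuous_subtype_val)
  have hreg : ∀ x, arcRegion M.chords (g x) = C := fun x =>
    arcRegion_eq_of_mem M.lt hC (hg x) x.2.1
  have hlift : ∀ x, arcRegion M.chords (hcont.connectedComponentsLift x) = C := by
    intro x
    obtain ⟨y, rfl⟩ := ConnectedComponents.surjective_coe x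
    rw [hcont.connectedComponentsLift_apply_coe]
    exact hreg y
  refine Nat.card_eq_of_bijective
    (fun x => (⟨hcont.connectedComponentsLift x, hlift x⟩ :
      {i : Fin n // arcRegion M.chords i = C})) ⟨?_, ?_⟩
  · intro x y hxy
    obtain ⟨x, rfl⟩ := ConnectedComponents.surjective_coe x
    obtain ⟨y, rfl⟩ := ConnectedComponents.surjective_coe y
    simp only [Subtype.mk.injEq, hcont.connectedComponentsLift_apply_coe] at hxy
    rw [ConnectedComponents.coe_eq_coe']
    have hsub : openArc (g y) ⊆ C ∩ Metric.sphere (0 : ℂ) 1 := by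
      refine Set.subset_inter ?_ (openArc_subset_sphere _)
      rw [← hreg y]
      exact openArc_subset_arcRegion M.lt _
    have hpre : IsPreconnected
        ((↑) ⁻¹' openArc (g y) : Set ↥(C ∩ Metric.sphere (0 : ℂ) 1)) := by
      rw [← Topology.IsInducing.subtypeVal.isPreconnected_image, Subtype.image_preimage_coe,
        Set.inter_eq_self_of_subset_right hsub]
      exact isPreconnected_openArc _
    refine hpre.subset_connectedComponent (hg y) ?_
    have := hg x
    rw [hxy] at this
    exact this
  · rintro ⟨i, hi⟩
    have hm : arcMid i ∈ C ∩ Metric.sphere (0 : ℂ) 1 :=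
      ⟨hi ▸ openArc_subset_arcRegion M.lt i (arcMid_mem i),
        openArc_subset_sphere i (arcMid_mem i)⟩
    refine ⟨((⟨arcMid i, hm⟩ : ↥(C ∩ Metric.sphere (0 : ℂ) 1)) : ConnectedComponents _), ?_⟩
    apply Subtype.ext
    simp only [hcont.connectedComponentsLift_apply_coe]
    exact openArc_disjoint (hg _) (arcMid_mem i)

open Classical in
theorem CircMatching.nReg_eq {n : ℕ} (M : CircMatching n) (hn : 0 < n) {i : ℕ} (hi : 1 ≤ i) :
    nReg M.chords i = ((Finset.univ.image (arcRegion M.chords)).filter fun C =>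
      (Finset.univ.filter fun a => arcRegion M.chords a = C).card = i).card := by
  have hcard : ∀ C ∈ regions M.chords, arcCount C =
      (Finset.univ.filter fun a => arcRegion M.chords a = C).card := by
    intro C hC
    rw [M.arcCount_eq hn hC, Nat.card_eq_fintype_card, Fintype.card_subtype]
  refine Nat.subtype_card _ fun C => ?_
  simp only [Finset.mem_filter, Finset.mem_image, Finset.mem_univ, true_and]
  constructor
  · rintro ⟨⟨a, rfl⟩, h⟩
    exact ⟨arcRegion_mem_regions M.lt a, (hcard _ (arcRegion_mem_regions M.lt a)).trans h⟩
  · rintro ⟨hC, h⟩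
    rw [hcard C hC] at h
    refine ⟨?_, h⟩
    obtain ⟨a, ha⟩ := Finset.card_pos.1 (h ▸ hi)
    exact ⟨a, (Finset.mem_filter.1 ha).2⟩

/-- The connected components of the crossing graph of a matching. -/
def CircMatching.Comp {n : ℕ} (M : CircMatching n) : Type :=
  Quot fun p q : {p // p ∈ M.chords} => CrossRel p.1 q.1

/-- The component of a chord. -/
def CircMatching.chordComp {n : ℕ} (M : CircMatching n) (p : {p // p ∈ M.chords}) : M.Comp :=
  Quot.mk _ p

/-- The chord at a vertex. -/
noncomputable def CircMatching.chordAt {n : ℕ} (M : CircMatching n) (v : Fin n) :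
    {p // p ∈ M.chords} :=
  ⟨(M.mem_unique v).choose, (M.mem_unique v).choose_spec.1.1⟩

/-- The component of a vertex. -/
noncomputable def CircMatching.comp {n : ℕ} (M : CircMatching n) (v : Fin n) : M.Comp :=
  M.chordComp (M.chordAt v)

noncomputable instance {n : ℕ} (M : CircMatching n) : Fintype M.Comp :=
  @Fintype.ofFinite _ (inferInstanceAs (Finite (Quot _)))

theorem CircMatching.chordAt_spec {n : ℕ} (M : CircMatching n) (v : Fin n) :
    (M.chordAt v).1.1 = v ∨ (M.chordAt v).1.2 = v :=
  (M.mem_unique v).choose_spec.1.2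

theorem CircMatching.eq_of_endpoint {n : ℕ} (M : CircMatching n) {p q : Fin n × Fin n}
    (hp : p ∈ M.chords) (hq : q ∈ M.chords) {v : Fin n} (hpv : p.1 = v ∨ p.2 = v)
    (hqv : q.1 = v ∨ q.2 = v) : p = q :=
  (M.mem_unique v).unique ⟨hp, hpv⟩ ⟨hq, hqv⟩

theorem CircMatching.comp_fst {n : ℕ} (M : CircMatching n) (p : {p // p ∈ M.chords}) :
    M.comp p.1.1 = M.chordComp p :=
  congrArg M.chordComp
    (Subtype.ext (M.eq_of_endpoint (M.chordAt _).2 p.2 (M.chordAt_spec _) (Or.inl rfl)))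

theorem CircMatching.comp_snd {n : ℕ} (M : CircMatching n) (p : {p // p ∈ M.chords}) :
    M.comp p.1.2 = M.chordComp p :=
  congrArg M.chordComp
    (Subtype.ext (M.eq_of_endpoint (M.chordAt _).2 p.2 (M.chordAt_spec _) (Or.inr rfl)))

/-- A vertex lies strictly between the endpoints of a chord. -/
def Inside {n : ℕ} (q : Fin n × Fin n) (v : Fin n) : Prop := q.1 < v ∧ v < q.2

theorem CircMatching.inside_fst_iff_snd {n : ℕ} (M : CircMatching n)
    (p q : {p // p ∈ M.chords}) (h : M.chordComp p ≠ M.chordComp q) :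
    Inside q.1 p.1.1 ↔ Inside q.1 p.1.2 := by
  have hn : ¬ CrossRel p.1 q.1 := fun hc => h (Quot.sound hc)
  have hpq : p.1 ≠ q.1 := fun he => h (by rw [Subtype.ext he])
  have h11 : p.1.1 ≠ q.1.1 := fun he => hpq (M.eq_of_endpoint p.2 q.2 (.inl rfl) (.inl he.symm))
  have h12 : p.1.1 ≠ q.1.2 := fun he => hpq (M.eq_of_endpoint p.2 q.2 (.inl rfl) (.inr he.symm))
  have h21 : p.1.2 ≠ q.1.1 := fun he => hpq (M.eq_of_endpoint p.2 q.2 (.inr rfl) (.inl he.symm))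
  have h22 : p.1.2 ≠ q.1.2 := fun he => hpq (M.eq_of_endpoint p.2 q.2 (.inr rfl) (.inr he.symm))
  have hp := M.lt p.1 p.2
  have hq := M.lt q.1 q.2
  unfold CrossRel Interleaves at hn
  unfold Inside
  omega

theorem CircMatching.inside_congr {n : ℕ} (M : CircMatching n) {p p' : {p // p ∈ M.chords}}
    (h : M.chordComp p = M.chordComp p') (q : {p // p ∈ M.chords})
    (hq : M.chordComp p ≠ M.chordComp q) : Inside q.1 p.1.1 ↔ Inside q.1 p'.1.1 := by
  have key : ∀ a b : {p // p ∈ M.chords},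
      Relation.EqvGen (fun p q : {p // p ∈ M.chords} => CrossRel p.1 q.1) a b →
      (M.chordComp a = M.chordComp b ∧ (M.chordComp a ≠ M.chordComp q →
        (Inside q.1 a.1.1 ↔ Inside q.1 b.1.1))) := by
    intro a b hab
    induction hab with
    | rel a b hab =>
      have he : M.chordComp a = M.chordComp b := Quot.sound hab
      refine ⟨he, fun hne => ?_⟩
      have ha := M.inside_fst_iff_snd a q hne
      have hb := M.inside_fst_iff_snd b q (he ▸ hne)
      unfold CrossRel Interleaves at hab
      unfold Inside at *
      omega
    | refl a => exact ⟨rfl, fun _ => Iff.rfl⟩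
    | symm a b _ ih => exact ⟨ih.1.symm, fun hne => (ih.2 (ih.1 ▸ hne)).symm⟩
    | trans a b c _ _ ih1 ih2 =>
      exact ⟨ih1.1.trans ih2.1, fun hne => (ih1.2 hne).trans (ih2.2 (ih1.1 ▸ hne))⟩
  exact (key p p' (Quot.eqvGen_exact h)).2 hq

theorem CircMatching.inside_vertex_congr {n : ℕ} (M : CircMatching n) {v w : Fin n}
    (h : M.comp v = M.comp w) (q : {p // p ∈ M.chords})
    (hq : M.comp v ≠ M.chordComp q) : Inside q.1 v ↔ Inside q.1 w := by
  have key : ∀ u : Fin n, M.comp u ≠ M.chordComp q →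
      (Inside q.1 u ↔ Inside q.1 (M.chordAt u).1.1) := by
    intro u hu
    rcases M.chordAt_spec u with h1 | h1
    · rw [h1]
    · rw [M.inside_fst_iff_snd _ _ hu, h1]
  rw [key v hq, key w (h ▸ hq)]
  exact M.inside_congr h q hq

/-- The cyclic successor of a vertex. -/
def cycNext {n : ℕ} (v : Fin n) : Fin n :=
  ⟨if v.val + 1 < n then v.val + 1 else 0, by split_ifs <;> omega⟩

/-- The vertices whose cyclic successor belongs to another component. -/
def CircMatching.exits {n : ℕ} (M : CircMatching n) : Set (Fin n) :=
  {v | M.comp (cycNext v) ≠ M.comp v}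

theorem CircMatching.exists_sameSide_of_mem_exits {n : ℕ} (M : CircMatching n) {v : Fin n}
    (hv : v ∈ M.exits) : ∃ j, j ≠ v ∧ SameSide M.chords v j := by
  have hvn : M.comp (cycNext v) ≠ M.comp v := hv
  have hne : ∀ (q : Fin n × Fin n) (hq : q ∈ M.chords) (u : Fin n), M.comp u = M.comp v →
      M.comp v ≠ M.chordComp ⟨q, hq⟩ → q.1 ≠ u ∧ q.2 ≠ u := by
    intro q hq u hu hqv
    constructor
    · rintro rfl
      exact hqv (hu ▸ M.comp_fst ⟨q, hq⟩)
    · rintro rfl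
      exact hqv (hu ▸ M.comp_snd ⟨q, hq⟩)
  have hends : ∀ (q : Fin n × Fin n) (hq : q ∈ M.chords), M.comp v = M.chordComp ⟨q, hq⟩ →
      M.comp q.1 = M.comp v ∧ M.comp q.2 = M.comp v := fun q hq hqv =>
    ⟨(M.comp_fst ⟨q, hq⟩).trans hqv.symm, (M.comp_snd ⟨q, hq⟩).trans hqv.symm⟩
  by_cases hex : ∃ w, v < w ∧ M.comp w = M.comp v
  · obtain ⟨w, ⟨hw1, hw2⟩, hmin⟩ :=
      Set.exists_min_image {w | v < w ∧ M.comp w = M.comp v} id (Set.toFinite _) hex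
    have hvw : v.val + 1 ≠ w.val := by
      intro he
      refine hvn ?_
      rw [← hw2]
      congr 1
      apply Fin.ext
      have := w.isLt
      simp only [cycNext]
      split_ifs <;> omega
    refine ⟨⟨w.val - 1, by omega⟩, ?_, ?_⟩
    · intro he
      have := congrArg Fin.val he
      simp only at this
      omega
    · intro q hq
      by_cases hqv : M.comp v = M.chordComp ⟨q, hq⟩
      · obtain ⟨c1, c2⟩ := hends q hq hqv
        have m1 := fun h => hmin q.1 ⟨h, c1⟩
        have m2 := fun h => hmin q.2 ⟨h, c2⟩
        simp only [id, Fin.le_def, Fin.lt_def] at *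
        omega
      · have h := M.inside_vertex_congr hw2.symm ⟨q, hq⟩ hqv
        obtain ⟨a1, a2⟩ := hne q hq v rfl hqv
        obtain ⟨b1, b2⟩ := hne q hq w hw2 hqv
        simp only [Inside, Fin.le_def, Fin.lt_def, ne_eq, Fin.ext_iff] at *
        omega
  · push Not at hex
    obtain ⟨w, hw2, hmin⟩ :=
      Set.exists_min_image {w | M.comp w = M.comp v} id (Set.toFinite _) ⟨v, rfl⟩
    have hw2' : M.comp w = M.comp v := hw2
    have hwv : w ≤ v := hmin v rfl
    by_cases hw0 : w.val = 0
    · have hvl : v.val + 1 < n := by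
        by_contra hc
        refine hvn ?_
        rw [← hw2']
        congr 1
        apply Fin.ext
        simp [cycNext, hc, hw0]
      refine ⟨⟨n - 1, by omega⟩, ?_, ?_⟩
      · intro he
        have := congrArg Fin.val he
        simp only at this
        omega
      · intro q hq
        have hlt := q.2.isLt
        by_cases hqv : M.comp v = M.chordComp ⟨q, hq⟩
        · obtain ⟨c1, c2⟩ := hends q hq hqv
          have m2 : q.2 ≤ v := not_lt.1 fun h => hex q.2 h c2
          simp only [Fin.le_def, Fin.lt_def] at *
          omega
        · have h := M.inside_vertex_congr hw2'.symm ⟨q, hq⟩ hqv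
          obtain ⟨a1, a2⟩ := hne q hq v rfl hqv
          simp only [Inside, Fin.le_def, Fin.lt_def, ne_eq, Fin.ext_iff] at *
          omega
    · refine ⟨⟨w.val - 1, by omega⟩, ?_, ?_⟩
      · intro he
        have := congrArg Fin.val he
        simp only [Fin.le_def] at *
        omega
      · intro q hq
        by_cases hqv : M.comp v = M.chordComp ⟨q, hq⟩
        · obtain ⟨c1, c2⟩ := hends q hq hqv
          have m1 := hmin q.1 c1
          have m2 : q.2 ≤ v := not_lt.1 fun h => hex q.2 h c2
          simp only [id, Fin.le_def, Fin.lt_def] at *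
          omega
        · have h := M.inside_vertex_congr hw2'.symm ⟨q, hq⟩ hqv
          obtain ⟨a1, a2⟩ := hne q hq v rfl hqv
          obtain ⟨b1, b2⟩ := hne q hq w hw2' hqv
          simp only [Inside, Fin.le_def, Fin.lt_def, ne_eq, Fin.ext_iff] at *
          omega

theorem CircMatching.comp_eq_or_exists_exit {n : ℕ} (M : CircMatching n) {a : Fin n} {A : M.Comp}
    (ha : M.comp a = A) (u : Fin n) (hau : a ≤ u) :
    M.comp u = A ∨ ∃ e ∈ M.exits, a ≤ e ∧ e < u ∧ M.comp e = A := by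
  obtain ⟨u, hu⟩ := u
  induction u with
  | zero =>
    left
    rw [← ha]
    congr 1
    exact le_antisymm (Fin.mk_le_of_le_val (Nat.zero_le _)) hau
  | succ u ih =>
    rcases hau.eq_or_lt with he | hlt
    · left
      rw [← he, ha]
    · have hau' : a ≤ ⟨u, by omega⟩ := Nat.lt_succ_iff.1 hlt
      rcases ih (by omega) hau' with h | ⟨e, he, h1, h2, h3⟩
      · by_cases hx : (⟨u, by omega⟩ : Fin n) ∈ M.exits
        · exact Or.inr ⟨_, hx, hau', Nat.lt_succ_self u, h⟩
        · left
          have hx' : M.comp (cycNext ⟨u, by omega⟩) = M.comp ⟨u, by omega⟩ := not_not.1 hx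
          rw [← h, ← hx']
          congr 1
          apply Fin.ext
          simp [cycNext, hu]
      · exact Or.inr ⟨e, he, h1, h2.trans (Nat.lt_succ_self u), h3⟩

theorem CircMatching.exists_exit_of_le {n : ℕ} (M : CircMatching n) {a : Fin n} {A : M.Comp}
    (ha : M.comp a = A) {t : Fin n} (hat : a ≤ t) (ht : t ∈ M.exits) :
    ∃ e ∈ M.exits, a ≤ e ∧ e ≤ t ∧ M.comp e = A := by
  rcases M.comp_eq_or_exists_exit ha t hat with h | ⟨e, he, h1, h2, h3⟩
  · exact ⟨t, ht, hat, le_rfl, h⟩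
  · exact ⟨e, he, h1, h2.le, h3⟩

theorem CircMatching.comp_zero_or_exists_exit {n : ℕ} (M : CircMatching n) {a : Fin n}
    {A : M.Comp} (ha : M.comp a = A) :
    M.comp ⟨0, Fin.pos a⟩ = A ∨ ∃ e ∈ M.exits, a ≤ e ∧ M.comp e = A := by
  have hn := Fin.pos a
  have hlast : a ≤ ⟨n - 1, by omega⟩ := Fin.le_def.2 (by simp only; omega)
  rcases M.comp_eq_or_exists_exit ha _ hlast with h | ⟨e, he, h1, -, h3⟩
  · by_cases hx : (⟨n - 1, by omega⟩ : Fin n) ∈ M.exits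
    · exact Or.inr ⟨_, hx, hlast, h⟩
    · left
      have hx' : M.comp (cycNext ⟨n - 1, by omega⟩) = M.comp ⟨n - 1, by omega⟩ := not_not.1 hx
      rw [← h, ← hx']
      congr 1
      apply Fin.ext
      have : ¬ n - 1 + 1 < n := by omega
      simp [cycNext, this]
  · exact Or.inr ⟨e, he, h1, h3⟩

theorem CircMatching.exists_exit {n : ℕ} (M : CircMatching n) {A B : M.Comp} (hAB : A ≠ B) :
    ∃ e ∈ M.exits, M.comp e = A := by
  obtain ⟨p, rfl⟩ : ∃ p, M.chordComp p = A := Quot.exists_rep A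
  obtain ⟨q, rfl⟩ : ∃ q, M.chordComp q = B := Quot.exists_rep B
  rcases M.comp_zero_or_exists_exit (M.comp_fst p) with h | ⟨e, he, -, h⟩
  · rcases M.comp_eq_or_exists_exit h q.1.1 (Fin.le_def.2 (Nat.zero_le _)) with h' | h'
    · exact absurd (h'.symm.trans (M.comp_fst q)) hAB
    · obtain ⟨e, he, -, -, h⟩ := h'
      exact ⟨e, he, h⟩
  · exact ⟨e, he, h⟩

theorem CircMatching.sameSide_of_injOn_exits {n : ℕ} (M : CircMatching n)
    (hinj : Set.InjOn M.comp M.exits) {t u : Fin n} (ht : t ∈ M.exits) (hu : u ∈ M.exits) :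
    SameSide M.chords t u := by
  have key : ∀ t ∈ M.exits, ∀ u ∈ M.exits, ∀ q ∈ M.chords,
      (q.1 ≤ t ∧ t < q.2) → (q.1 ≤ u ∧ u < q.2) := by
    intro t ht u hu q hq ⟨h1, h2⟩
    by_contra hc
    obtain ⟨e, he, he1, he2, heA⟩ := M.exists_exit_of_le (M.comp_fst ⟨q, hq⟩) h1 ht
    change q.1 ≤ e at he1
    have hout : ∃ f ∈ M.exits, (q.2 ≤ f ∨ f < q.1) ∧ M.comp f = M.chordComp ⟨q, hq⟩ := by
      by_cases h : q.2 ≤ u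
      · obtain ⟨f, hf, hf1, -, hfA⟩ := M.exists_exit_of_le (M.comp_snd ⟨q, hq⟩) h hu
        exact ⟨f, hf, Or.inl hf1, hfA⟩
      · have hlt : u < q.1 := by omega
        rcases M.comp_zero_or_exists_exit (M.comp_snd ⟨q, hq⟩) with h0 | ⟨f, hf, hf1, hfA⟩
        · obtain ⟨f, hf, -, hf2, hfA⟩ :=
            M.exists_exit_of_le h0 (Fin.le_def.2 (Nat.zero_le _)) hu
          exact ⟨f, hf, Or.inr (hf2.trans_lt hlt), hfA⟩
        · exact ⟨f, hf, Or.inl hf1, hfA⟩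
    obtain ⟨f, hf, hf1, hfA⟩ := hout
    have := hinj he hf (heA.trans hfA.symm)
    subst this
    omega
  exact fun q hq => ⟨key t ht u hu q hq, key u hu t ht q hq⟩

theorem CircMatching.card_le_two_mul_chords {n : ℕ} (M : CircMatching n) :
    n ≤ 2 * M.chords.card := by
  have h : (Finset.univ : Finset (Fin n)) ⊆ M.chords.biUnion fun p => {p.1, p.2} := by
    intro v _
    have := M.chordAt_spec v
    exact Finset.mem_biUnion.2 ⟨_, (M.chordAt v).2, by simpa [eq_comm] using this⟩
  have h2 := (Finset.card_le_card h).trans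
    (Finset.card_biUnion_le_card_mul _ _ 2 fun p _ => Finset.card_le_two)
  simpa [mul_comm] using h2

theorem CircMatching.card_chords_le {n : ℕ} (M : CircMatching n) :
    M.chords.card ≤ crossNum M.chords + Fintype.card M.Comp := by
  obtain ⟨E, hE⟩ : ∃ E : Finset ((Fin n × Fin n) × (Fin n × Fin n)),
      E = (M.chords ×ˢ M.chords).filter fun pq => Interleaves pq.1 pq.2 := ⟨_, rfl⟩
  have hcard : crossNum M.chords = E.card := by rw [hE, crossNum]
  have hmem : ∀ x, x ∈ E ↔ (x.1 ∈ M.chords ∧ x.2 ∈ M.chords) ∧ Interleaves x.1 x.2 := by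
    simp [hE]
  let φ : ({p // p ∈ M.chords} → ℚ) →ₗ[ℚ] ({x // x ∈ E} → ℚ) :=
    LinearMap.funLeft ℚ ℚ (fun x : {x // x ∈ E} =>
        (⟨x.1.1, ((hmem _).1 x.2).1.1⟩ : {p // p ∈ M.chords}))
      - LinearMap.funLeft ℚ ℚ (fun x : {x // x ∈ E} =>
        (⟨x.1.2, ((hmem _).1 x.2).1.2⟩ : {p // p ∈ M.chords}))
  have h1 := LinearMap.finrank_range_add_finrank_ker φ
  have h2 : Module.finrank ℚ (LinearMap.range φ) ≤ crossNum M.chords := by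
    refine (Submodule.finrank_le _).trans ?_
    rw [Module.finrank_fintype_fun_eq_card, Fintype.card_coe, hcard]
  have h3 : Module.finrank ℚ (LinearMap.ker φ) ≤ Fintype.card M.Comp := by
    have hle : LinearMap.ker φ ≤ LinearMap.range (LinearMap.funLeft ℚ ℚ M.chordComp) := by
      intro f hf
      have hf' : ∀ a b : {p // p ∈ M.chords}, Interleaves a.1 b.1 → f a = f b := by
        intro a b hab
        have := congrFun (LinearMap.mem_ker.1 hf) ⟨(a.1, b.1),
          (hmem _).2 ⟨⟨a.2, b.2⟩, hab⟩⟩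
        simpa [φ, LinearMap.funLeft_apply, sub_eq_zero] using this
      refine ⟨Quot.lift f fun a b hab => ?_, rfl⟩
      rcases hab with h | h
      · exact hf' a b h
      · exact (hf' b a h).symm
    refine (Submodule.finrank_mono hle).trans ((LinearMap.finrank_range_le _).trans ?_)
    rw [Module.finrank_fintype_fun_eq_card]
  rw [Module.finrank_fintype_fun_eq_card, Fintype.card_coe] at h1
  omega

theorem CircMatching.card_comp_le {n : ℕ} (M : CircMatching n) (hcore : IsCoreMatching M) :
    Fintype.card M.Comp ≤ crossNum M.chords := by
  rw [crossNum, ← Fintype.card_coe]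
  refine Fintype.card_le_of_surjective (fun x => M.chordComp
    ⟨x.1.1, (Finset.mem_product.1 (Finset.mem_filter.1 x.2).1).1⟩) ?_
  intro A
  obtain ⟨p, rfl⟩ : ∃ p, M.chordComp p = A := Quot.exists_rep A
  obtain ⟨q, hq, h⟩ := hcore p.1 p.2
  rcases h with h | h
  · exact ⟨⟨(p.1, q), Finset.mem_filter.2 ⟨Finset.mem_product.2 ⟨p.2, hq⟩, h⟩⟩, rfl⟩
  · exact ⟨⟨(q, p.1), Finset.mem_filter.2 ⟨Finset.mem_product.2 ⟨hq, p.2⟩, h⟩⟩,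
      Quot.sound (Or.inl h)⟩

open Classical in
theorem CircMatching.card_comp_le_card_exits {n : ℕ} (M : CircMatching n)
    (hc : 1 < Fintype.card M.Comp) :
    Fintype.card M.Comp ≤ (Finset.univ.filter fun v => v ∈ M.exits).card ∧
    (Fintype.card M.Comp = (Finset.univ.filter fun v => v ∈ M.exits).card →
      Set.InjOn M.comp M.exits) := by
  have himg : (Finset.univ.filter fun v => v ∈ M.exits).image M.comp = Finset.univ := by
    refine Finset.eq_univ_of_forall fun A => ?_
    obtain ⟨B, hB⟩ := Fintype.exists_ne_of_one_lt_card hc A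
    obtain ⟨e, he, h⟩ := M.exists_exit hB.symm
    exact Finset.mem_image.2 ⟨e, Finset.mem_filter.2 ⟨Finset.mem_univ _, he⟩, h⟩
  have hcard : Fintype.card M.Comp
      = ((Finset.univ.filter fun v => v ∈ M.exits).image M.comp).card := by
    rw [himg, Finset.card_univ]
  refine ⟨hcard ▸ Finset.card_image_le, fun h => ?_⟩
  have := Finset.card_image_iff.1 (hcard.symm.trans h)
  simpa using this

open Classical in
/-- If the elements with a nontrivial fibre of `f` form a set `T` of size `k ≥ 2` on which `f` is
constant, then `T` is a fibre and all other fibres are singletons. -/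
theorem card_fibres_of_constant_on {α β : Type*} [Fintype α] (f : α → β) {T : Finset α} {k : ℕ}
    (hk : T.card = k) (hk2 : 2 ≤ k) (hT : ∀ t ∈ T, ∀ u ∈ T, f t = f u)
    (hS : ∀ a, a ∉ T → ∀ b, f b = f a → b = a) :
    ((Finset.univ.image f).filter fun C => (Finset.univ.filter fun a => f a = C).card = k).card = 1
    ∧ ∀ i, 1 ≤ i → i ≠ 1 → i ≠ k →
      ((Finset.univ.image f).filter fun C =>
        (Finset.univ.filter fun a => f a = C).card = i).card = 0 := by
  obtain ⟨t, ht⟩ : T.Nonempty := Finset.card_pos.1 (by omega)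
  have hfT : ∀ a ∈ T, (Finset.univ.filter fun b => f b = f a) = T := by
    intro a ha
    ext b
    simp only [Finset.mem_filter, Finset.mem_univ, true_and]
    refine ⟨fun h => ?_, fun hb => hT b hb a ha⟩
    by_contra hb
    exact hb (hS b hb a h.symm ▸ ha)
  have hfN : ∀ a, a ∉ T → (Finset.univ.filter fun b => f b = f a) = {a} := by
    intro a ha
    ext b
    simp only [Finset.mem_filter, Finset.mem_univ, true_and, Finset.mem_singleton]
    exact ⟨hS a ha b, fun h => h ▸ rfl⟩
  constructor
  · rw [Finset.card_eq_one]
    refine ⟨f t, ?_⟩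
    ext C
    simp only [Finset.mem_filter, Finset.mem_image, Finset.mem_univ, true_and,
      Finset.mem_singleton]
    constructor
    · rintro ⟨⟨a, rfl⟩, h⟩
      by_cases ha : a ∈ T
      · exact hT a ha t ht
      · rw [hfN a ha, Finset.card_singleton] at h
        omega
    · rintro rfl
      exact ⟨⟨t, rfl⟩, (congrArg Finset.card (hfT t ht)).trans hk⟩
  · intro i _ hi1 hik
    rw [Finset.card_eq_zero, Finset.filter_eq_empty_iff]
    intro C hC h
    obtain ⟨a, -, rfl⟩ := Finset.mem_image.1 hC
    by_cases ha : a ∈ T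
    · rw [hfT a ha] at h
      omega
    · rw [hfN a ha, Finset.card_singleton] at h
      omega

open Classical in
theorem card_singleton_fibres {α β : Type*} [Fintype α] (f : α → β) :
    ((Finset.univ.image f).filter fun C =>
      (Finset.univ.filter fun a => f a = C).card = 1).card
    ≤ (Finset.univ.filter fun a => ∀ b, f b = f a → b = a).card := by
  refine (Finset.card_le_card ?_).trans (Finset.card_image_le (f := f))
  intro C hC
  obtain ⟨h1, h2⟩ := Finset.mem_filter.1 hC
  obtain ⟨a, -, rfl⟩ := Finset.mem_image.1 h1
  obtain ⟨c, hc⟩ := Finset.card_eq_one.1 h2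
  have huniq : ∀ b, f b = f a → b = c := fun b hb =>
    Finset.mem_singleton.1 (hc ▸ Finset.mem_filter.2 ⟨Finset.mem_univ b, hb⟩)
  exact Finset.mem_image.2 ⟨a, Finset.mem_filter.2 ⟨Finset.mem_univ _, fun b hb =>
    (huniq b hb).trans (huniq a rfl).symm⟩, rfl⟩

/-- For a core matching `K` with `k(K) ≥ 3` crossings, `n₁(K) ≤ 3 k(K)`, and
equality holds if and only if `n₁(K) = 3k`, `n_k(K) = 1` and `nᵢ(K) = 0` for
`i ∉ {1, k}` (`i` ranging over the positive integers). -/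
theorem coreMatching_nReg_one_le_three_k {n k : ℕ} (M : CircMatching n)
    (hcore : IsCoreMatching M) (hk : crossNum M.chords = k) (hk3 : 3 ≤ k) :
    nReg M.chords 1 ≤ 3 * k ∧
    (nReg M.chords 1 = 3 * k ↔
      (nReg M.chords 1 = 3 * k ∧ nReg M.chords k = 1 ∧
        ∀ i : ℕ, 1 ≤ i → i ≠ 1 → i ≠ k → nReg M.chords i = 0)) := by
  classical
  have hm := M.card_chords_le
  have hn2 := M.card_le_two_mul_chords
  have hck := M.card_comp_le hcore
  rw [hk] at hm hck
  have hn : 0 < n := by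
    rcases Nat.eq_zero_or_pos n with rfl | h
    · rw [crossNum, Finset.card_eq_zero.2] at hk
      · omega
      · ext x
        exact x.1.1.elim0
    · exact h
  set f := arcRegion M.chords with hf
  have h1 : nReg M.chords 1 ≤ (Finset.univ.filter fun a => ∀ b, f b = f a → b = a).card := by
    rw [M.nReg_eq hn le_rfl]
    convert card_singleton_fibres f
  have hsplit := Finset.card_filter_add_card_filter_not (s := (Finset.univ : Finset (Fin n)))
    fun a => ∀ b, f b = f a → b = a
  rw [Finset.card_univ, Fintype.card_fin] at hsplit
  set S := Finset.univ.filter fun a => ¬ ∀ b, f b = f a → b = a with hS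
  set T := Finset.univ.filter fun v => v ∈ M.exits with hT
  have hTS : T ⊆ S := by
    intro v hv
    obtain ⟨j, hj, hs⟩ := M.exists_sameSide_of_mem_exits (Finset.mem_filter.1 hv).2
    exact Finset.mem_filter.2 ⟨Finset.mem_univ _, fun h =>
      hj (h j (arcRegion_eq_of_sameSide M.lt hs).symm)⟩
  have hTS' := Finset.card_le_card hTS
  by_cases hc : 1 < Fintype.card M.Comp
  · obtain ⟨hcT, hinj⟩ : Fintype.card M.Comp ≤ T.card ∧
        (Fintype.card M.Comp = T.card → Set.InjOn M.comp M.exits) := by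
      convert M.card_comp_le_card_exits hc
    refine ⟨by omega, fun h => ?_, fun h => h.1⟩
    have hST : T = S := Finset.eq_of_subset_of_card_le hTS (by omega)
    have hinj' := hinj (by omega)
    obtain ⟨r1, r2⟩ := card_fibres_of_constant_on f (T := T) (k := k) (by omega) (by omega)
      (fun t ht u hu => arcRegion_eq_of_sameSide M.lt
        (M.sameSide_of_injOn_exits hinj' (Finset.mem_filter.1 ht).2 (Finset.mem_filter.1 hu).2))
      (fun a ha => by
        by_contra hcon
        exact ha (hST ▸ Finset.mem_filter.2 ⟨Finset.mem_univ _, hcon⟩))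
    exact ⟨h, (M.nReg_eq hn (by omega)).trans r1,
      fun i hi hi1 hik => (M.nReg_eq hn hi).trans (r2 i hi hi1 hik)⟩
  · exact ⟨by omega, fun h => by omega, fun h => h.1⟩
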